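/- The axiom scheme notelim (¬φ → (φ → ψ)) is not provable from the set of axiom schemes TMM ∖ {notelim}. -/

import Mathlib

set_option autoImplicit false

/-! ## Megill-style scheme-level formalization of first-order logic -/

/-- Metavariables: variable metavariables `vr i` (standing for x_i) and
formula metavariables `fm i` (standing for φ_i). -/
inductive MV : Type
  | vr (i : ℕ) : MV
  | fm (i : ℕ) : MV
  deriving DecidableEq

/-- Metaformulas over the pure language of equality. -/
inductive MF : Type
  | phi (i : ℕ) : MF
  | eq (i j : ℕ) : MF
  | imp (a b : MF) : MF
  | not (a : MF) : MF
  | all (i : ℕ) (a : MF) : MF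
  deriving DecidableEq

/-- The set of metavariables occurring in a metaformula. -/
def MF.OC : MF → Set MV
  | .phi i => {MV.fm i}
  | .eq i j => {MV.vr i, MV.vr j}
  | .imp a b => a.OC ∪ b.OC
  | .not a => a.OC
  | .all i a => insert (MV.vr i) a.OC

/-- A scheme: finitely many hypotheses, a conclusion, and disjoint-variable
(DV) conditions given as unordered pairs of metavariables. -/
structure Scheme : Type where
  hyps : Finset MF
  concl : MF
  dv : Set (Sym2 MV)

/-- Metavariables occurring in a scheme (in its hypotheses or conclusion). -/
def Scheme.OC (Φ : Scheme) : Set MV :=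
  {m | ∃ h ∈ Φ.hyps, m ∈ h.OC} ∪ Φ.concl.OC

/-- A (type-preserving) substitution: variable metavariables go to variable
metavariables, formula metavariables go to metaformulas; it is the identity
outside a finite set. -/
structure Subst : Type where
  vr : ℕ → ℕ
  fm : ℕ → MF
  finVr : {i : ℕ | vr i ≠ i}.Finite
  finFm : {i : ℕ | fm i ≠ MF.phi i}.Finite

/-- Action of a substitution on a metaformula. -/
def MF.substMF (σ : Subst) : MF → MF
  | .phi i => σ.fm i
  | .eq i j => .eq (σ.vr i) (σ.vr j)
  | .imp a b => .imp (a.substMF σ) (b.substMF σ)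
  | .not a => .not (a.substMF σ)
  | .all i a => .all (σ.vr i) (a.substMF σ)

/-- The set of metavariables occurring in the image of a metavariable. -/
def Subst.appMV (σ : Subst) : MV → Set MV
  | .vr i => {MV.vr (σ.vr i)}
  | .fm i => (σ.fm i).OC

/-- σ is the identity on a given metavariable. -/
def Subst.Fixes (σ : Subst) : MV → Prop
  | .vr i => σ.vr i = i
  | .fm i => σ.fm i = MF.phi i

/-- A substitution is legitimate on a scheme if it does not violate its
DV conditions. -/
def Subst.Legit (σ : Subst) (Φ : Scheme) : Prop :=
  ∀ m n : MV, s(m, n) ∈ Φ.dv → σ.appMV m ∩ σ.appMV n = ∅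

/-- Propagation of DV conditions along a substitution. -/
def Subst.dvMap (σ : Subst) (D : Set (Sym2 MV)) : Set (Sym2 MV) :=
  {q | ∃ m' n' m n : MV, s(m', n') ∈ D ∧ m ∈ σ.appMV m' ∧ n ∈ σ.appMV n' ∧ q = s(m, n)}

/-- Action of a substitution on a scheme. -/
def Scheme.substS (Φ : Scheme) (σ : Subst) : Scheme :=
  ⟨Φ.hyps.image (MF.substMF σ), Φ.concl.substMF σ, σ.dvMap Φ.dv⟩

/-- `Φ.Inst Ψ` : Ψ is an instance of Φ, i.e. the result of a legitimate
substitution, possibly followed by the addition of DV conditions. -/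
def Scheme.Inst (Φ Ψ : Scheme) : Prop :=
  ∃ σ : Subst, σ.Legit Φ ∧ Ψ.hyps = Φ.hyps.image (MF.substMF σ) ∧
    Ψ.concl = Φ.concl.substMF σ ∧ σ.dvMap Φ.dv ⊆ Ψ.dv

/-- Metavariables occurring in a list of metaformulas. -/
def listOC (P : List MF) : Set MV := {m | ∃ f ∈ P, m ∈ f.OC}

/-- The DV conditions of a proof `P` of the scheme `Φ`: those of `Φ`, plus all
pairs {m, n} where m is a dummy metavariable of `P` and n occurs in `P`. -/
def proofDV (Φ : Scheme) (P : List MF) : Set (Sym2 MV) :=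
  Φ.dv ∪ {q | ∃ m n : MV, m ∈ listOC P ∧ m ∉ Φ.OC ∧ n ∈ listOC P ∧ q = s(m, n)}

/-- `P` is a proof of the scheme `Φ` from the set `S` of schemes. -/
def IsProof (S : Set Scheme) (Φ : Scheme) (P : List MF) : Prop :=
  P ≠ [] ∧ P.getLast? = some Φ.concl ∧
  ∀ (k : ℕ) (hk : k < P.length),
    P.get ⟨k, hk⟩ ∈ Φ.hyps ∨
    ∃ hs : Finset MF,
      (∀ h ∈ hs, ∃ (l : ℕ) (hl : l < k), P.get ⟨l, hl.trans hk⟩ = h) ∧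
      ∃ Ξ ∈ S, Ξ.Inst ⟨hs, P.get ⟨k, hk⟩, proofDV Φ P⟩

/-- `S ⊢ Φ` : the scheme `Φ` is provable from the set `S` of schemes. -/
def Provable (S : Set Scheme) (Φ : Scheme) : Prop := ∃ P : List MF, IsProof S Φ P

/-! ## Object level: first-order formulas and semantics -/

/-- First-order formulas over the pure language of equality, with
individual variables v_i. -/
inductive FM : Type
  | eq (i j : ℕ) : FM
  | imp (a b : FM) : FM
  | not (a : FM) : FM
  | all (i : ℕ) (a : FM) : FM
  deriving DecidableEq

/-- Variables occurring in a first-order formula. -/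
def FM.vars : FM → Set ℕ
  | .eq i j => {i, j}
  | .imp a b => a.vars ∪ b.vars
  | .not a => a.vars
  | .all i a => insert i a.vars

/-- An object-substitution: variable metavariables go to individual variables,
formula metavariables go to first-order formulas. -/
structure OSubst : Type where
  vr : ℕ → ℕ
  fm : ℕ → FM

/-- Action of an object-substitution on a metaformula, yielding a first-order
formula (an object-instance). -/
def MF.osubst (τ : OSubst) : MF → FM
  | .phi i => τ.fm i
  | .eq i j => .eq (τ.vr i) (τ.vr j)
  | .imp a b => .imp (a.osubst τ) (b.osubst τ)
  | .not a => .not (a.osubst τ)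
  | .all i a => .all (τ.vr i) (a.osubst τ)

/-- Variables occurring in the image of a metavariable. -/
def OSubst.appVars (τ : OSubst) : MV → Set ℕ
  | .vr i => {τ.vr i}
  | .fm i => (τ.fm i).vars

/-- An object-substitution is legitimate on a scheme if images of DV-paired
metavariables share no variables. -/
def OSubst.Legit (τ : OSubst) (Φ : Scheme) : Prop :=
  ∀ m n : MV, s(m, n) ∈ Φ.dv → τ.appVars m ∩ τ.appVars n = ∅

/-- Evaluation of a first-order formula in a structure with domain `D`
(equality interpreted as equality) under an assignment `ρ`. -/
def FM.eval {D : Type} (ρ : ℕ → D) : FM → Prop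
  | .eq i j => ρ i = ρ j
  | .imp a b => a.eval ρ → b.eval ρ
  | .not a => ¬ a.eval ρ
  | .all i a => ∀ d : D, a.eval (Function.update ρ i d)

/-- Validity of a first-order formula in the structure with domain `D`. -/
def FM.Valid (D : Type) (f : FM) : Prop := ∀ ρ : ℕ → D, f.eval ρ

/-- A scheme is true if for every legitimate object-instance and every
nonempty domain, the conclusion is valid whenever all hypotheses are. -/
def Scheme.IsTrue (Φ : Scheme) : Prop :=
  ∀ τ : OSubst, τ.Legit Φ →
    ∀ D : Type, Nonempty D →
      (∀ h ∈ Φ.hyps, FM.Valid D (h.osubst τ)) → FM.Valid D (Φ.concl.osubst τ)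

/-! ## (i,j)-transforms and supertruth -/

/-- Auxiliary: (i,j)-transform with a flag recording whether we are inside the
scope of a quantifier ∀x_i. -/
def MF.transfAux (i j : ℕ) : MF → Bool → MF
  | .phi k, _ => .phi k
  | .eq a b, ins =>
      .eq (if ins = true ∧ a = j then i else a) (if ins = true ∧ b = j then i else b)
  | .imp a b, ins => .imp (a.transfAux i j ins) (b.transfAux i j ins)
  | .not a, ins => .not (a.transfAux i j ins)
  | .all k a, ins =>
      .all (if ins = true ∧ k = j then i else k) (a.transfAux i j (ins || decide (k = i)))

/-- The (i,j)-transform of a metaformula: replace every occurrence of x_j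
lying within the scope of a quantifier ∀x_i by x_i. -/
def MF.transform (i j : ℕ) (f : MF) : MF := f.transfAux i j false

/-- The (i,j)-transform of a scheme: transform hypotheses and conclusion,
keep the DV conditions. -/
def Scheme.transform (i j : ℕ) (Φ : Scheme) : Scheme :=
  ⟨Φ.hyps.image (MF.transform i j), Φ.concl.transform i j, Φ.dv⟩

/-- The (i,j)-transform (and the {i,j}-transform) is legitimate on a scheme
if {x_i, x_j} is not among its DV conditions. -/
def Scheme.TLegit (i j : ℕ) (Φ : Scheme) : Prop := s(MV.vr i, MV.vr j) ∉ Φ.dv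

/-- A (hypothesis-free) scheme is presupertrue if all the legitimate
(i,j)-transforms of all its instances (including itself) are true. -/
def Scheme.PreST (Φ : Scheme) : Prop :=
  ∀ Ψ : Scheme, (Ψ = Φ ∨ Φ.Inst Ψ) → ∀ i j : ℕ, Ψ.TLegit i j → (Ψ.transform i j).IsTrue

/-- A scheme is supertrue if every instance of it (including itself) satisfies:
whenever all legitimate (i,j)-transforms of all instances of each of its
hypotheses (taken as hypothesis-free schemes with the inherited DV conditions)
are true, all legitimate (i,j)-transforms of all instances of its conclusion
are true. -/
def Scheme.Supertrue (Φ : Scheme) : Prop :=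
  ∀ Ψ : Scheme, (Ψ = Φ ∨ Φ.Inst Ψ) →
    (∀ h ∈ Ψ.hyps, Scheme.PreST ⟨∅, h, Ψ.dv⟩) → Scheme.PreST ⟨∅, Ψ.concl, Ψ.dv⟩

/-- The {i,j}-transform of a metaformula: the composite of the (i,j)-transform
and the (j,i)-transform, the one with smaller first index performed first. -/
def MF.stransform (i j : ℕ) (f : MF) : MF :=
  if i ≤ j then (f.transform i j).transform j i else (f.transform j i).transform i j

/-- The {i,j}-transform of a scheme. -/
def Scheme.stransform (i j : ℕ) (Φ : Scheme) : Scheme :=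
  ⟨Φ.hyps.image (MF.stransform i j), Φ.concl.stransform i j, Φ.dv⟩

/-- A metaformula contains no formula metavariables. -/
def MF.FmFree : MF → Prop
  | .phi _ => False
  | .eq _ _ => True
  | .imp a b => a.FmFree ∧ b.FmFree
  | .not a => a.FmFree
  | .all _ a => a.FmFree

/-- A scheme contains no formula metavariables. -/
def Scheme.FmFree (Φ : Scheme) : Prop := (∀ h ∈ Φ.hyps, h.FmFree) ∧ Φ.concl.FmFree

/-- A (hypothesis-free) scheme is pre-semisupertrue if all the legitimate
{i,j}-transforms of all its instances (including itself) are true. -/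
def Scheme.PreSST (Φ : Scheme) : Prop :=
  ∀ Ψ : Scheme, (Ψ = Φ ∨ Φ.Inst Ψ) → ∀ i j : ℕ, Ψ.TLegit i j → (Ψ.stransform i j).IsTrue

/-- A scheme is semisupertrue if it is true and every formula-metavariable-free
instance of it satisfies: whenever all legitimate {i,j}-transforms of all
instances of each of its hypotheses are true, all legitimate {i,j}-transforms
of all instances of its conclusion are true. -/
def Scheme.Semisupertrue (Φ : Scheme) : Prop :=
  Φ.IsTrue ∧
  ∀ Ψ : Scheme, (Ψ = Φ ∨ Φ.Inst Ψ) → Ψ.FmFree →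
    (∀ h ∈ Ψ.hyps, Scheme.PreSST ⟨∅, h, Ψ.dv⟩) → Scheme.PreSST ⟨∅, Ψ.concl, Ψ.dv⟩

/-- A metaformula is quantifier-free. -/
def MF.QFree : MF → Prop
  | .phi _ => True
  | .eq _ _ => True
  | .imp a b => a.QFree ∧ b.QFree
  | .not a => a.QFree
  | .all _ _ => False

/-- A scheme is quantifier-free. -/
def Scheme.QFree (Φ : Scheme) : Prop := (∀ h ∈ Φ.hyps, h.QFree) ∧ Φ.concl.QFree

/-! ## The axiom schemes of the system TMM
(x = x_0, y = x_1, z = x_2; φ = φ_0, ψ = φ_1, χ = φ_2, θ = φ_3, τ = φ_4) -/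

def ax_mp : Scheme := ⟨{.phi 0, .imp (.phi 0) (.phi 1)}, .phi 1, ∅⟩

def ax_minimp : Scheme :=
  ⟨∅, .imp (.phi 0) (.imp (.imp (.phi 1) (.phi 2))
      (.imp (.imp (.imp (.phi 3) (.phi 1)) (.imp (.phi 2) (.phi 4)))
        (.imp (.phi 1) (.phi 4)))), ∅⟩

def ax_peirce : Scheme := ⟨∅, .imp (.imp (.imp (.phi 0) (.phi 1)) (.phi 0)) (.phi 0), ∅⟩

def ax_contrap : Scheme :=
  ⟨∅, .imp (.imp (.phi 0) (.not (.phi 1))) (.imp (.phi 1) (.not (.phi 0))), ∅⟩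

def ax_notelim : Scheme := ⟨∅, .imp (.not (.phi 0)) (.imp (.phi 0) (.phi 1)), ∅⟩

def ax_gen : Scheme := ⟨{.phi 0}, .all 0 (.phi 0), ∅⟩

def ax_ALLdistr : Scheme :=
  ⟨∅, .imp (.all 0 (.imp (.phi 0) (.phi 1))) (.imp (.all 0 (.phi 0)) (.all 0 (.phi 1))), ∅⟩

def ax_spec : Scheme := ⟨∅, .imp (.all 0 (.phi 0)) (.phi 0), ∅⟩

def ax_modal5 : Scheme :=
  ⟨∅, .imp (.not (.all 0 (.phi 0))) (.all 0 (.not (.all 0 (.phi 0)))), ∅⟩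

def ax_vacGen : Scheme := ⟨∅, .imp (.phi 0) (.all 0 (.phi 0)), {s(MV.vr 0, MV.fm 0)}⟩

def ax_ALLcomm : Scheme :=
  ⟨∅, .imp (.all 0 (.all 1 (.phi 0))) (.all 1 (.all 0 (.phi 0))), ∅⟩

def ax_EQrefl : Scheme := ⟨∅, .eq 0 0, ∅⟩

def ax_EQsymm : Scheme := ⟨∅, .imp (.eq 0 1) (.eq 1 0), ∅⟩

def ax_EQtrans : Scheme := ⟨∅, .imp (.eq 0 1) (.imp (.eq 1 2) (.eq 0 2)), ∅⟩

def ax_denot : Scheme :=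
  ⟨∅, .imp (.eq 0 0) (.not (.all 1 (.not (.eq 1 0)))), {s(MV.vr 0, MV.vr 1)}⟩

def ax_subst : Scheme :=
  ⟨∅, .all 0 (.imp (.eq 0 1) (.imp (.phi 0) (.all 0 (.imp (.eq 0 1) (.phi 0))))),
    {s(MV.vr 0, MV.vr 1), s(MV.vr 1, MV.fm 0)}⟩

def ax_ALLeq : Scheme :=
  ⟨∅, .imp (.all 0 (.eq 0 1)) (.imp (.all 0 (.phi 0)) (.all 1 (.phi 0))), ∅⟩

def ax_genEq : Scheme :=
  ⟨∅, .imp (.not (.all 0 (.eq 0 1)))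
      (.imp (.not (.all 0 (.eq 0 2))) (.imp (.eq 1 2) (.all 0 (.eq 1 2)))), ∅⟩

def ax_modalD : Scheme := ⟨∅, .imp (.all 0 (.not (.phi 0))) (.not (.all 0 (.phi 0))), ∅⟩

def ax_modal4 : Scheme := ⟨∅, .imp (.all 0 (.phi 0)) (.all 0 (.all 0 (.phi 0))), ∅⟩

/-- The system TMM. -/
def TMM : Set Scheme :=
  {ax_mp, ax_minimp, ax_peirce, ax_contrap, ax_notelim, ax_gen, ax_ALLdistr, ax_spec,
   ax_modal5, ax_vacGen, ax_ALLcomm, ax_EQrefl, ax_EQsymm, ax_EQtrans, ax_denot,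
   ax_subst, ax_ALLeq, ax_genEq}

/-- The subsystem T. -/
def Tsys : Set Scheme :=
  {ax_mp, ax_minimp, ax_peirce, ax_contrap, ax_notelim, ax_gen, ax_ALLdistr, ax_vacGen,
   ax_EQrefl, ax_EQsymm, ax_EQtrans, ax_denot}

/-!
Erase quantifiers, read every equality as true and read every negation as true. Each axiom scheme
of TMM other than notelim then becomes a classically valid propositional inference: in those that
mention negation (contrap, modal5, denot, genEq) the final consequent is a negation or an equality,
hence true. But notelim collapses to φ → ψ, which fails when φ is true and ψ is false.
-/

theorem Provable.induction {S : Set Scheme} {Φ : Scheme} (hΦ : Provable S Φ) {p : MF → Prop}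
    (hyps : ∀ f ∈ Φ.hyps, p f)
    (inst : ∀ Ξ ∈ S, ∀ Ψ : Scheme, Ξ.Inst Ψ → (∀ f ∈ Ψ.hyps, p f) → p Ψ.concl) :
    p Φ.concl := by
  obtain ⟨P, -, hlast, hP⟩ := hΦ
  have entries (k : ℕ) : ∀ hk : k < P.length, p (P.get ⟨k, hk⟩) := by
    induction k using Nat.strong_induction_on with
    | _ k ih =>
      intro hk
      obtain hhyp | ⟨_, hearlier, Ξ, hΞ, hinst⟩ := hP k hk
      · exact hyps _ hhyp
      · refine inst Ξ hΞ _ hinst fun f hf => ?_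
        obtain ⟨l, hl, rfl⟩ := hearlier f hf
        exact ih l hl _
  obtain ⟨k, hk⟩ := List.mem_iff_get.mp (List.mem_of_getLast? hlast)
  exact hk ▸ entries k k.isLt

/-- Truth of a metaformula, given truth values `v` of the formula metavariables, when quantifiers
are erased and all equalities and all negations are read as true. -/
def MF.Holds (v : ℕ → Prop) : MF → Prop
  | .phi i => v i
  | .eq _ _ => True
  | .imp a b => a.Holds v → b.Holds v
  | .not _ => True
  | .all _ a => a.Holds v

theorem MF.holds_substMF (v : ℕ → Prop) (σ : Subst) (a : MF) :
    (a.substMF σ).Holds v ↔ a.Holds fun i => (σ.fm i).Holds v := by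
  induction a with
  | phi _ | eq _ _ | not _ => rfl
  | imp _ _ iha ihb => exact imp_congr iha ihb
  | all _ _ ih => exact ih

/-- A scheme is sound if, in the sense of `MF.Holds`, its conclusion holds under every valuation
under which its hypotheses hold. The field `dv` does not enter because `MF.Holds` does not depend
on variable metavariables. -/
def Scheme.IsSound (Φ : Scheme) : Prop :=
  ∀ v : ℕ → Prop, (∀ f ∈ Φ.hyps, f.Holds v) → Φ.concl.Holds v

theorem Scheme.IsSound.inst {Φ Ψ : Scheme} (hΦ : Φ.IsSound) (hΨ : Φ.Inst Ψ) : Ψ.IsSound := by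
  obtain ⟨σ, -, hhyps, hconcl, -⟩ := hΨ
  intro v hv
  rw [hconcl, MF.holds_substMF]
  refine hΦ _ fun f hf => (MF.holds_substMF v σ f).mp (hv _ ?_)
  exact hhyps ▸ Finset.mem_image_of_mem _ hf

theorem Provable.isSound {S : Set Scheme} {Φ : Scheme} (hΦ : Provable S Φ)
    (hS : ∀ Ξ ∈ S, Ξ.IsSound) : Φ.IsSound :=
  fun v hv => hΦ.induction hv fun Ξ hΞ _ hinst => (hS Ξ hΞ).inst hinst v

theorem isSound_ax_mp : ax_mp.IsSound := fun v hv => by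
  have minor : v 0 := hv (.phi 0) (Finset.mem_insert_self _ _)
  have major : v 0 → v 1 :=
    hv (.imp (.phi 0) (.phi 1)) (Finset.mem_insert_of_mem (Finset.mem_singleton_self _))
  exact major minor

theorem isSound_ax_minimp : ax_minimp.IsSound :=
  fun _ _ _ hψχ h hψ => h (fun _ => hψ) (hψχ hψ)

theorem isSound_ax_peirce : ax_peirce.IsSound :=
  fun v _ => peirce (v 0) (v 1)

theorem isSound_ax_contrap : ax_contrap.IsSound :=
  fun _ _ _ _ => trivial

theorem isSound_ax_gen : ax_gen.IsSound :=
  fun _ hv => hv (.phi 0) (Finset.mem_singleton_self _)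

theorem isSound_ax_ALLdistr : ax_ALLdistr.IsSound :=
  fun _ _ hφψ => hφψ

theorem isSound_ax_spec : ax_spec.IsSound :=
  fun _ _ hφ => hφ

theorem isSound_ax_modal5 : ax_modal5.IsSound :=
  fun _ _ _ => trivial

theorem isSound_ax_vacGen : ax_vacGen.IsSound :=
  fun _ _ hφ => hφ

theorem isSound_ax_ALLcomm : ax_ALLcomm.IsSound :=
  fun _ _ hφ => hφ

theorem isSound_ax_EQrefl : ax_EQrefl.IsSound :=
  fun _ _ => trivial

theorem isSound_ax_EQsymm : ax_EQsymm.IsSound :=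
  fun _ _ _ => trivial

theorem isSound_ax_EQtrans : ax_EQtrans.IsSound :=
  fun _ _ _ _ => trivial

theorem isSound_ax_denot : ax_denot.IsSound :=
  fun _ _ _ => trivial

theorem isSound_ax_subst : ax_subst.IsSound :=
  fun _ _ _ hφ _ => hφ

theorem isSound_ax_ALLeq : ax_ALLeq.IsSound :=
  fun _ _ _ hφ => hφ

theorem isSound_ax_genEq : ax_genEq.IsSound :=
  fun _ _ _ _ _ => trivial

theorem isSound_of_mem_TMM_diff_notelim {Ξ : Scheme} (hΞ : Ξ ∈ TMM \ {ax_notelim}) :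
    Ξ.IsSound := by
  obtain ⟨hmem, hne⟩ := hΞ
  simp only [TMM, Set.mem_insert_iff, Set.mem_singleton_iff] at hmem
  rcases hmem with rfl | rfl | rfl | rfl | rfl | rfl | rfl | rfl | rfl | rfl | rfl | rfl | rfl |
    rfl | rfl | rfl | rfl | rfl
  exacts [isSound_ax_mp, isSound_ax_minimp, isSound_ax_peirce, isSound_ax_contrap,
    absurd (Set.mem_singleton ax_notelim) hne, isSound_ax_gen, isSound_ax_ALLdistr,
    isSound_ax_spec, isSound_ax_modal5, isSound_ax_vacGen, isSound_ax_ALLcomm, isSound_ax_EQrefl,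
    isSound_ax_EQsymm, isSound_ax_EQtrans, isSound_ax_denot, isSound_ax_subst, isSound_ax_ALLeq,
    isSound_ax_genEq]

theorem not_isSound_ax_notelim : ¬ ax_notelim.IsSound := fun hsound =>
  have collapse : True → (0 = 0) → (1 = 0) :=
    hsound (fun i => i = 0) fun _ hf => absurd hf (Finset.notMem_empty _)
  Nat.one_ne_zero (collapse trivial rfl)

/-- The axiom scheme notelim is not provable from TMM ∖ {notelim}. -/
theorem notelim_independent : ¬ Provable (TMM \ {ax_notelim}) ax_notelim :=
  fun hprov => not_isSound_ax_notelim (hprov.isSound fun _ => isSound_of_mem_TMM_diff_notelim)
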